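/- arXiv:2409.13134 — 3 statements merged into one kernel-verified Lean document; each statement's English description precedes it below -/
import Mathlib

section
/- Suppose M is a countable structure admitting a finite base. Then sr(M) < ω·3. -/
open FirstOrder

universe u v w

namespace ScottTools

variable (L : FirstOrder.Language.{u, v}) (M : Type w) (N : Type w) [L.Structure M] [L.Structure N]

/-- Two tuples (of the same length) have the same quantifier-free type. -/
def QFEquiv {n : ℕ} (a : Fin n → M) (b : Fin n → N) : Prop :=
  ∀ φ : L.Formula (Fin n), φ.IsQF → (φ.Realize a ↔ φ.Realize b)

/-- The ordinal-indexed back-and-forth equivalence `(M, ā) ≡_α (N, b̄)`: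
`≡₀` is equality of quantifier-free types, `≡_{α+1}` is the back-and-forth condition
with respect to `≡_α`, and limit stages are intersections. -/
def BFEquiv : Ordinal.{w} → (n : ℕ) → (Fin n → M) → (Fin n → N) → Prop
  | α, n, a, b =>
    QFEquiv L M N a b ∧
    ∀ β : Ordinal.{w}, β < α →
      (∀ x : M, ∃ y : N, BFEquiv β (n + 1) (Fin.snoc a x) (Fin.snoc b y)) ∧
      (∀ y : N, ∃ x : M, BFEquiv β (n + 1) (Fin.snoc a x) (Fin.snoc b y))
  termination_by α => α

/-- `(M, ā) ≡_∞ (N, b̄)`: back-and-forth equivalent for all ordinals. -/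
def BFEquivInf (n : ℕ) (a : Fin n → M) (b : Fin n → N) : Prop :=
  ∀ α : Ordinal.{w}, BFEquiv L M N α n a b

/-- The Scott rank of a structure: the least ordinal `α` such that any two finite tuples
that are `≡_α`-equivalent are `≡_∞`-equivalent. -/
noncomputable def ScottRank : Ordinal.{w} :=
  sInf {α : Ordinal.{w} | ∀ (n : ℕ) (a b : Fin n → M),
    BFEquiv L M M α n a b → BFEquivInf L M M n a b}

/-- `B` is a base for `M`: distinct elements of `M` have distinct complete first-order
types over `B`. -/
def IsBase (B : Set M) : Prop :=
  ∀ a b : M,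
    (∀ (k : ℕ) (p : Fin k → M), (∀ i, p i ∈ B) →
      ∀ φ : L.Formula (Fin (k + 1)),
        (φ.Realize (Fin.snoc p a) ↔ φ.Realize (Fin.snoc p b))) →
    a = b

end ScottTools

open ScottTools

/-!
Let `e` be a finite tuple over which `≡_α` separates the points of `M`. If `e ≡_{α+ω} e'`, then
`≡_α` also separates points over `e'`, and `(e, x) ≡_α (e', y)` is the graph of a bijection:
finitely many moves of the back-and-forth game match any finite tuple, and separation makes the
matching unique. Hence matched tuples are `≡_∞`. A tuple `ā` with `ā ≡_{α+ω+k} c̄` can be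
prolonged by `e`, of length `k`, so the Scott rank is at most `α + ω + k`. Since `≡_ω` refines
equality of first-order types, a finite base is such a tuple with `α = ω`.
-/

namespace ScottTools

open FirstOrder.Language
open scoped Ordinal

section BackAndForth

variable {L : FirstOrder.Language.{u, v}} {M N P : Type w}
  [L.Structure M] [L.Structure N] [L.Structure P]
  {α β : Ordinal.{w}} {m n r : ℕ} {a : Fin n → M} {b : Fin n → N} {c : Fin n → P}

theorem snoc_comp_eq_comp_snoc {X : Type*} (a : Fin n → X) (x : X) (σ : Fin m → Fin n) :
    (Fin.snoc (a ∘ σ) x : Fin (m + 1) → X) =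
      (Fin.snoc a x : Fin (n + 1) → X) ∘
        (Fin.snoc (Fin.castSucc ∘ σ) (Fin.last n) : Fin (m + 1) → Fin (n + 1)) := by
  ext i
  cases i using Fin.lastCases <;> simp

theorem append_comp_castAdd {X : Type*} (a : Fin n → X) (x : Fin r → X) :
    Fin.append a x ∘ Fin.castAdd r = a :=
  funext (Fin.append_left a x)

theorem append_comp_natAdd {X : Type*} (a : Fin n → X) (x : Fin r → X) :
    Fin.append a x ∘ Fin.natAdd n = x :=
  funext (Fin.append_right a x)

namespace QFEquiv

theorem symm (h : QFEquiv L M N a b) : QFEquiv L N M b a :=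
  fun φ hφ => (h φ hφ).symm

theorem trans (hab : QFEquiv L M N a b) (hbc : QFEquiv L N P b c) : QFEquiv L M P a c :=
  fun φ hφ => (hab φ hφ).trans (hbc φ hφ)

theorem comp (h : QFEquiv L M N a b) (σ : Fin m → Fin n) :
    QFEquiv L M N (a ∘ σ) (b ∘ σ) := fun φ hφ => by
  simpa only [Formula.realize_relabel] using h (φ.relabel σ) (BoundedFormula.IsQF.relabel hφ _)

theorem apply_eq_iff (h : QFEquiv L M N a b) (i j : Fin n) : a i = a j ↔ b i = b j := by
  simpa only [Formula.realize_equal, Term.realize_var] using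
    h ((Term.var i).equal (Term.var j)) (BoundedFormula.IsAtomic.equal _ _).isQF

end QFEquiv

theorem bfEquiv_iff :
    BFEquiv L M N α n a b ↔ QFEquiv L M N a b ∧ ∀ β < α,
      (∀ x : M, ∃ y : N, BFEquiv L M N β (n + 1) (Fin.snoc a x) (Fin.snoc b y)) ∧
      (∀ y : N, ∃ x : M, BFEquiv L M N β (n + 1) (Fin.snoc a x) (Fin.snoc b y)) := by
  rw [BFEquiv]

namespace BFEquiv

theorem qfEquiv (h : BFEquiv L M N α n a b) : QFEquiv L M N a b :=
  (bfEquiv_iff.1 h).1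

theorem forth (h : BFEquiv L M N α n a b) (hβ : β < α) (x : M) :
    ∃ y : N, BFEquiv L M N β (n + 1) (Fin.snoc a x) (Fin.snoc b y) :=
  ((bfEquiv_iff.1 h).2 β hβ).1 x

theorem back (h : BFEquiv L M N α n a b) (hβ : β < α) (y : N) :
    ∃ x : M, BFEquiv L M N β (n + 1) (Fin.snoc a x) (Fin.snoc b y) :=
  ((bfEquiv_iff.1 h).2 β hβ).2 y

theorem mono (hβ : β ≤ α) (h : BFEquiv L M N α n a b) : BFEquiv L M N β n a b :=
  bfEquiv_iff.2 ⟨h.qfEquiv, fun _ hγ =>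
    ⟨h.forth (hγ.trans_le hβ), h.back (hγ.trans_le hβ)⟩⟩

theorem symm (h : BFEquiv L M N α n a b) : BFEquiv L N M α n b a := by
  induction α using WellFoundedLT.induction generalizing n with
  | ind α ih =>
    refine bfEquiv_iff.2 ⟨h.qfEquiv.symm, fun β hβ => ⟨fun y => ?_, fun x => ?_⟩⟩
    · obtain ⟨x, hx⟩ := h.back hβ y
      exact ⟨x, ih β hβ hx⟩
    · obtain ⟨y, hy⟩ := h.forth hβ x
      exact ⟨y, ih β hβ hy⟩

theorem trans (hab : BFEquiv L M N α n a b) (hbc : BFEquiv L N P α n b c) :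
    BFEquiv L M P α n a c := by
  induction α using WellFoundedLT.induction generalizing n with
  | ind α ih =>
    refine bfEquiv_iff.2 ⟨hab.qfEquiv.trans hbc.qfEquiv, fun β hβ => ⟨fun x => ?_, fun z => ?_⟩⟩
    · obtain ⟨y, hy⟩ := hab.forth hβ x
      obtain ⟨z, hz⟩ := hbc.forth hβ y
      exact ⟨z, ih β hβ hy hz⟩
    · obtain ⟨y, hy⟩ := hbc.back hβ z
      obtain ⟨x, hx⟩ := hab.back hβ y
      exact ⟨x, ih β hβ hx hy⟩

theorem comp (h : BFEquiv L M N α n a b) (σ : Fin m → Fin n) :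
    BFEquiv L M N α m (a ∘ σ) (b ∘ σ) := by
  induction α using WellFoundedLT.induction generalizing n m with
  | ind α ih =>
    refine bfEquiv_iff.2 ⟨h.qfEquiv.comp σ, fun β hβ => ⟨fun x => ?_, fun y => ?_⟩⟩
    · obtain ⟨y, hy⟩ := h.forth hβ x
      refine ⟨y, ?_⟩
      rw [snoc_comp_eq_comp_snoc a, snoc_comp_eq_comp_snoc b]
      exact ih β hβ hy _
    · obtain ⟨x, hx⟩ := h.back hβ y
      refine ⟨x, ?_⟩
      rw [snoc_comp_eq_comp_snoc a, snoc_comp_eq_comp_snoc b]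
      exact ih β hβ hx _

theorem snoc_comp {x : M} {y : N}
    (h : BFEquiv L M N α (n + 1) (Fin.snoc a x) (Fin.snoc b y)) (σ : Fin m → Fin n) :
    BFEquiv L M N α (m + 1) (Fin.snoc (a ∘ σ) x) (Fin.snoc (b ∘ σ) y) := by
  rw [snoc_comp_eq_comp_snoc a, snoc_comp_eq_comp_snoc b]
  exact h.comp _

theorem snoc_apply (h : BFEquiv L M N α n a b) (i : Fin n) :
    BFEquiv L M N α (n + 1) (Fin.snoc a (a i)) (Fin.snoc b (b i)) := by
  simpa only [Fin.comp_snoc, Function.comp_id] using h.comp (Fin.snoc id i : Fin (n + 1) → Fin n)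

theorem snoc_of_append {x : Fin r → M} {y : Fin r → N}
    (h : BFEquiv L M N α (n + r) (Fin.append a x) (Fin.append b y)) (i : Fin r) :
    BFEquiv L M N α (n + 1) (Fin.snoc a (x i)) (Fin.snoc b (y i)) := by
  have hcomp := h.comp (Fin.snoc (Fin.castAdd r) (Fin.natAdd n i) : Fin (n + 1) → Fin (n + r))
  simpa only [Fin.comp_snoc, append_comp_castAdd, Fin.append_right] using hcomp

theorem of_append_right {x : Fin r → M} {y : Fin r → N}
    (h : BFEquiv L M N α (n + r) (Fin.append a x) (Fin.append b y)) : BFEquiv L M N α r x y := by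
  simpa only [append_comp_natAdd] using h.comp (Fin.natAdd n)

theorem exists_append (h : BFEquiv L M N (α + r) n a b) (x : Fin r → M) :
    ∃ y : Fin r → N, BFEquiv L M N α (n + r) (Fin.append a x) (Fin.append b y) := by
  induction r generalizing α with
  | zero =>
    refine ⟨Fin.elim0, ?_⟩
    rw [Subsingleton.elim x Fin.elim0, Fin.append_elim0, Fin.append_elim0]
    simpa using h
  | succ r ih =>
    rw [Nat.cast_succ, Nat.cast_add_one_comm, ← add_assoc] at h
    obtain ⟨y, hy⟩ := ih h (Fin.init x)
    obtain ⟨z, hz⟩ := hy.forth (lt_add_one α) (x (Fin.last r))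
    refine ⟨Fin.snoc y z, ?_⟩
    rw [← Fin.append_snoc, ← Fin.append_snoc, Fin.snoc_init_self] at hz
    exact hz

end BFEquiv

end BackAndForth

section FirstOrderTypes

variable {L : FirstOrder.Language.{u, v}} {M N : Type w} [L.Structure M] [L.Structure N]
  {α : Ordinal.{w}} {n : ℕ} {a : Fin n → M} {b : Fin n → N}

/-- The quantifier rank of a formula, the maximal nesting depth of its quantifiers: it bounds the
level `k` at which `≡_k` preserves the formula. -/
def quantifierRank {V : Type*} : ∀ {l : ℕ}, L.BoundedFormula V l → ℕ
  | _, .falsum => 0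
  | _, .equal _ _ => 0
  | _, .rel _ _ => 0
  | _, .imp φ ψ => max (quantifierRank φ) (quantifierRank ψ)
  | _, .all φ => quantifierRank φ + 1

theorem QFEquiv.realize_iff_of_isAtomic (h : QFEquiv L M N a b) {V : Type*} {l : ℕ}
    {φ : L.BoundedFormula V l} (hφ : φ.IsAtomic) (s : V → Fin n) (t : Fin l → Fin n) :
    φ.Realize (a ∘ s) (a ∘ t) ↔ φ.Realize (b ∘ s) (b ∘ t) := by
  cases hφ with
  | equal t₁ t₂ =>
    have := h ((t₁.relabel (Sum.elim s t)).equal (t₂.relabel (Sum.elim s t)))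
      (BoundedFormula.IsAtomic.equal _ _).isQF
    simpa only [Formula.realize_equal, Term.realize_relabel, Sum.comp_elim,
      BoundedFormula.realize_bdEqual] using this
  | rel R ts =>
    have := h (R.formula fun i => (ts i).relabel (Sum.elim s t))
      (BoundedFormula.IsAtomic.rel _ _).isQF
    simpa only [Formula.realize_rel, Term.realize_relabel, Sum.comp_elim,
      BoundedFormula.realize_rel] using this

theorem BFEquiv.realize_iff_of_quantifierRank_le {V : Type*} {l : ℕ} {φ : L.BoundedFormula V l}
    (hφ : (quantifierRank φ : Ordinal.{w}) ≤ α) (h : BFEquiv L M N α n a b)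
    (s : V → Fin n) (t : Fin l → Fin n) :
    φ.Realize (a ∘ s) (a ∘ t) ↔ φ.Realize (b ∘ s) (b ∘ t) := by
  induction φ generalizing α n with
  | falsum => rfl
  | equal t₁ t₂ => exact h.qfEquiv.realize_iff_of_isAtomic (.equal t₁ t₂) s t
  | rel R ts => exact h.qfEquiv.realize_iff_of_isAtomic (.rel R ts) s t
  | imp φ ψ ihφ ihψ =>
    have hφ_le : (quantifierRank φ : Ordinal.{w}) ≤ α :=
      (Nat.cast_le.2 (le_max_left _ _)).trans hφ
    have hψ_le : (quantifierRank ψ : Ordinal.{w}) ≤ α :=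
      (Nat.cast_le.2 (le_max_right _ _)).trans hφ
    rw [BoundedFormula.realize_imp, BoundedFormula.realize_imp, ihφ hφ_le h, ihψ hψ_le h]
  | all φ ih =>
    rw [quantifierRank, Nat.cast_succ, Order.add_one_le_iff] at hφ
    have realize_snoc_iff {x : M} {y : N}
        (hxy : BFEquiv L M N (quantifierRank φ) (n + 1) (Fin.snoc a x) (Fin.snoc b y)) :
        φ.Realize (a ∘ s) (Fin.snoc (a ∘ t) x) ↔ φ.Realize (b ∘ s) (Fin.snoc (b ∘ t) y) := by
      have := ih le_rfl hxy (Fin.castSucc ∘ s) (Fin.snoc (Fin.castSucc ∘ t) (Fin.last n))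
      simpa only [← snoc_comp_eq_comp_snoc, ← Function.comp_assoc, Fin.snoc_comp_castSucc]
        using this
    rw [BoundedFormula.realize_all, BoundedFormula.realize_all]
    constructor
    · intro hM y
      obtain ⟨x, hxy⟩ := h.back hφ y
      exact (realize_snoc_iff hxy).1 (hM x)
    · intro hN x
      obtain ⟨y, hxy⟩ := h.forth hφ x
      exact (realize_snoc_iff hxy).2 (hN y)

theorem BFEquiv.realize_formula_iff (h : BFEquiv L M N ω n a b) (φ : L.Formula (Fin n)) :
    φ.Realize a ↔ φ.Realize b := by
  have hrank : (quantifierRank φ : Ordinal.{w}) ≤ ω := (Ordinal.natCast_lt_omega0 _).le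
  have := h.realize_iff_of_quantifierRank_le hrank id Fin.elim0
  rwa [Subsingleton.elim (a ∘ Fin.elim0) default, Subsingleton.elim (b ∘ Fin.elim0) default] at this

end FirstOrderTypes

section Base

variable {L : FirstOrder.Language.{u, v}} {M N : Type w} [L.Structure M] [L.Structure N]
  {α : Ordinal.{w}} {m n : ℕ} {e : Fin m → M} {e' : Fin m → N}

/-- The finite tuple `e` is a base with `≡_α` in place of equality of first-order types: distinct
elements of `M` are not `≡_α`-equivalent over `e`. -/
def IsBFBase (L : FirstOrder.Language.{u, v}) {M : Type w} [L.Structure M] (α : Ordinal.{w})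
    {m : ℕ} (e : Fin m → M) : Prop :=
  ∀ ⦃x y : M⦄, BFEquiv L M M α (m + 1) (Fin.snoc e x) (Fin.snoc e y) → x = y

theorem IsBase.isBFBase_omega0 (h : IsBase L M (Set.range e)) : IsBFBase L ω e := by
  intro x y hxy
  refine h x y fun k p hp φ => ?_
  choose σ hσ using hp
  obtain rfl : e ∘ σ = p := funext hσ
  exact (hxy.snoc_comp σ).realize_formula_iff φ

namespace IsBFBase

theorem of_comp {σ : Fin n → Fin m} (h : IsBFBase L α (e ∘ σ)) : IsBFBase L α e :=
  fun _ _ hxy => h (hxy.snoc_comp σ)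

theorem of_bfEquiv (he : IsBFBase L α e) (h : BFEquiv L M N (α + 2) m e e') :
    IsBFBase L α e' := by
  intro x y hxy
  obtain ⟨z, hz⟩ := h.symm.exists_append (r := 2) ![x, y]
  have hzz : z 0 = z 1 :=
    he ((hz.snoc_of_append 0).symm.trans (hxy.trans (hz.snoc_of_append 1)))
  exact (hz.of_append_right.qfEquiv.apply_eq_iff 0 1).2 hzz

theorem qfEquiv_of_forall_snoc (he' : IsBFBase L α e') (h : BFEquiv L M N (α + n) m e e')
    {x : Fin n → M} {y : Fin n → N}
    (hxy : ∀ i, BFEquiv L M N α (m + 1) (Fin.snoc e (x i)) (Fin.snoc e' (y i))) :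
    QFEquiv L M N x y := by
  obtain ⟨z, hz⟩ := h.exists_append x
  obtain rfl : z = y := funext fun i => he' ((hz.snoc_of_append i).symm.trans (hxy i))
  exact hz.of_append_right.qfEquiv

theorem bfEquivInf_of_forall_snoc (he' : IsBFBase L α e') (h : BFEquiv L M N (α + ω) m e e')
    {x : Fin n → M} {y : Fin n → N}
    (hxy : ∀ i, BFEquiv L M N α (m + 1) (Fin.snoc e (x i)) (Fin.snoc e' (y i))) :
    BFEquivInf L M N n x y := by
  intro γ
  induction γ using WellFoundedLT.induction generalizing n with
  | ind γ ih =>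
    have hn : BFEquiv L M N (α + n) m e e' :=
      h.mono (by gcongr; exact (Ordinal.natCast_lt_omega0 n).le)
    have hlt : α < α + ω := lt_add_of_pos_right α Ordinal.omega0_pos
    have matched_snoc {p : M} {q : N}
        (hpq : BFEquiv L M N α (m + 1) (Fin.snoc e p) (Fin.snoc e' q)) (i : Fin (n + 1)) :
        BFEquiv L M N α (m + 1) (Fin.snoc e ((Fin.snoc x p : Fin (n + 1) → M) i))
          (Fin.snoc e' ((Fin.snoc y q : Fin (n + 1) → N) i)) := by
      cases i using Fin.lastCases with
      | last => simpa only [Fin.snoc_last] using hpq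
      | cast i => simpa only [Fin.snoc_castSucc] using hxy i
    refine bfEquiv_iff.2 ⟨he'.qfEquiv_of_forall_snoc hn hxy, fun β hβ => ⟨fun p => ?_, fun q => ?_⟩⟩
    · obtain ⟨q, hpq⟩ := h.forth hlt p
      exact ⟨q, ih β hβ (matched_snoc hpq)⟩
    · obtain ⟨p, hpq⟩ := h.back hlt q
      exact ⟨p, ih β hβ (matched_snoc hpq)⟩

theorem scottRank_le (he : IsBFBase L α e) : ScottRank L M ≤ α + ω + m := by
  refine csInf_le' fun n a c hac => ?_
  obtain ⟨d, hd⟩ := hac.exists_append e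
  have hae : IsBFBase L α (Fin.append a e) :=
    of_comp (σ := Fin.natAdd n) (by rwa [append_comp_natAdd])
  have hcd : IsBFBase L α (Fin.append c d) :=
    hae.of_bfEquiv (hd.mono (by gcongr; exact (Ordinal.natCast_lt_omega0 2).le))
  refine hcd.bfEquivInf_of_forall_snoc hd fun i => ?_
  simpa only [Fin.append_left] using (hd.mono le_self_add).snoc_apply (Fin.castAdd m i)

end IsBFBase

end Base

end ScottTools

theorem scottRank_lt_of_finite_base_general {L : FirstOrder.Language.{u, v}} {M : Type w}
    [L.Structure M] {B : Set M} (hfin : B.Finite) (hbase : IsBase L M B) :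
    ScottRank L M < Ordinal.omega0 * 3 := by
  obtain ⟨k, e, -, rfl⟩ := hfin.fin_param
  calc
    ScottRank L M ≤ Ordinal.omega0 + Ordinal.omega0 + k := hbase.isBFBase_omega0.scottRank_le
    _ < Ordinal.omega0 + Ordinal.omega0 + Ordinal.omega0 := by
      gcongr
      exact Ordinal.natCast_lt_omega0 k
    _ = Ordinal.omega0 * 3 := by
      rw [← two_add_one_eq_three, ← one_add_one_eq_two, mul_add_one, mul_add_one, mul_one]

/-- A countable structure admitting a finite base has Scott rank `< ω·3`. -/
theorem scottRank_lt_of_finite_base {L : FirstOrder.Language.{u, v}} {M : Type w}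
    [L.Structure M] [Countable M] (B : Set M) (hfin : B.Finite) (hbase : IsBase L M B) :
    ScottRank L M < Ordinal.omega0 * 3 :=
  scottRank_lt_of_finite_base_general hfin hbase
end

section
/- Let (P, ≤, δ) ∈ ℙ with P infinite, let 𝔐⁺ be a tame expansion of 𝔐_P, and let T = Th(𝔐⁺). Then every model M⁺ of T with the property that any two elements of M⁺ that are E_p-equivalent for every p ∈ P are equal admits an elementary embedding into 𝔐⁺. -/
namespace MP

open FirstOrder

/-- A purely relational language, with relation symbols `Rs k` of arity `k`. -/
def relLang (Rs : ℕ → Type v) : FirstOrder.Language :=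
  ⟨fun _ => Empty, Rs⟩

/-- The universe of `𝔐_P`: the product `∏_{p ∈ P} δ(p)`. -/
abbrev MProd {P : Type u} (δ : P → ℕ) : Type u := (p : P) → Fin (δ p)

/-- The standard crosscutting equivalence relation `E_p` on `𝔐_P`:
`f E_p g` iff `f q = g q` for all `q ≤ p`. -/
def stdE {P : Type u} [PartialOrder P] (δ : P → ℕ) (p : P) (f g : MProd δ) : Prop :=
  ∀ q : P, q ≤ p → f q = g q

/-- A structure on `𝔐_P` in a language with designated binary symbols `E p` is a tame
expansion of `𝔐_P` if the symbols `E p` are interpreted standardly and every relation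
of the language is `E_p`-invariant for some `p`. -/
def IsTameExpansion {P : Type u} [PartialOrder P] (δ : P → ℕ) {Rs : ℕ → Type v}
    (E : P → Rs 2) (S : (relLang Rs).Structure (MProd δ)) : Prop :=
  (∀ (p : P) (x : Fin 2 → MProd δ),
    S.RelMap (E p : (relLang Rs).Relations 2) x ↔ stdE δ p (x 0) (x 1)) ∧
  (∀ (k : ℕ) (R : Rs k), ∃ p : P, ∀ x y : Fin k → MProd δ,
    (∀ i, stdE δ p (x i) (y i)) →
      (S.RelMap (R : (relLang Rs).Relations k) x ↔ S.RelMap (R : (relLang Rs).Relations k) y))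

end MP

open MP FirstOrder

/-!
Since `M⁺` satisfies the theory of `𝔐⁺`, some ultrafilter on the maps `v : M⁺ → 𝔐⁺` makes every
formula true of points of `M⁺` true of almost all of their images. The space of such maps is
compact, so the ultrafilter converges pointwise to a map `g`, which is injective because distinct
points of `M⁺` are separated by some `E_p`. A formula over a tame expansion involves only finitely
many coordinates, so it is preserved by the permutations of `𝔐⁺` that do not change these
coordinates. For a given finite tuple, such a permutation takes its image under almost every `v` to
its image under `g`; hence `g` is elementary.
-/

namespace MP

open Filter Topology

theorem exists_perm_eqOn {X : Type*} {α : Type*} (r : Setoid X) {s : Set α} (hs : s.Finite)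
    {v w : α → X} (hv : s.InjOn v) (hw : s.InjOn w) (hvw : ∀ a ∈ s, r (v a) (w a)) :
    ∃ σ : Equiv.Perm X, (∀ x, r (σ x) x) ∧ s.EqOn (σ ∘ v) w := by
  classical
  induction s, hs using Set.Finite.induction_on with
  | empty => exact ⟨1, fun x => r.refl x, Set.eqOn_empty _ _⟩
  | @insert a s ha _ ih =>
    obtain ⟨hvs, hva⟩ := (Set.injOn_insert ha).1 hv
    obtain ⟨hws, hwa⟩ := (Set.injOn_insert ha).1 hw
    obtain ⟨σ, hσ, hσs⟩ := ih hvs hws fun b hb => hvw b (Set.mem_insert_of_mem a hb)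
    have hσa : r (σ (v a)) (w a) := r.trans (hσ _) (hvw a (Set.mem_insert a s))
    have hswap : ∀ x, r (Equiv.swap (σ (v a)) (w a) x) x := by
      intro x
      rw [Equiv.swap_apply_def]
      split_ifs with hx hx
      · exact hx ▸ r.symm hσa
      · exact hx ▸ hσa
      · exact r.refl x
    refine ⟨σ.trans (Equiv.swap (σ (v a)) (w a)), fun x => r.trans (hswap _) (hσ x), ?_⟩
    rintro b (rfl | hb)
    · exact Equiv.swap_apply_left _ _
    · have hσb : σ (v b) = w b := hσs hb
      have hne : w b ≠ σ (v a) := fun h => hva ⟨b, hb, σ.injective (hσb.trans h)⟩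
      have hne' : w b ≠ w a := fun h => hwa ⟨b, hb, h⟩
      calc Equiv.swap (σ (v a)) (w a) (σ (v b))
        _ = Equiv.swap (σ (v a)) (w a) (w b) := by rw [hσb]
        _ = w b := Equiv.swap_apply_of_ne_of_ne hne hne'

section AverageType

variable {L : Language} {M N α : Type*} [L.Structure M] [L.Structure N]

variable (L) in
/-- The type of the tuple `x` over the empty set is the average type of the ultrafilter `U`: a
formula holds at `x` iff it holds at `U`-almost all tuples of `N`. -/
def HasAverageType (U : Ultrafilter (α → N)) (x : α → M) : Prop :=
  ∀ φ : L.Formula α, (∀ᶠ v in (U : Filter (α → N)), φ.Realize v) ↔ φ.Realize x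

theorem exists_realize_of_elementarilyEquivalent (hMN : M ≅[L] N) {φ : L.Formula α} {x : α → M}
    (hφ : φ.Realize x) : ∃ v : α → N, φ.Realize v := by
  classical
  have hM : M ⊨ φ.exClosure := φ.realize_exClosure.2
    ⟨fun a => x a, (Language.BoundedFormula.realize_restrictFreeVar (f := id) x fun _ => rfl).2 hφ⟩
  obtain ⟨v, hv⟩ := φ.realize_exClosure.1 ((hMN.realize_sentence _).1 hM)
  have hN : α → Nonempty N := fun a => hMN.nonempty_iff.1 ⟨x a⟩
  refine ⟨fun a => if ha : a ∈ φ.freeVarFinset then v ⟨a, ha⟩ else (hN a).some, ?_⟩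
  exact (Language.BoundedFormula.realize_restrictFreeVar _ (by simp)).1 hv

theorem exists_hasAverageType (hMN : M ≅[L] N) (x : α → M) :
    ∃ U : Ultrafilter (α → N), HasAverageType L U x := by
  let B : {φ : L.Formula α // φ.Realize x} → Filter (α → N) := fun φ => 𝓟 {v | φ.1.Realize v}
  have : Nonempty {φ : L.Formula α // φ.Realize x} := ⟨⊤, Language.Formula.realize_top.2 trivial⟩
  have hdir : Directed (· ≥ ·) B := by
    rintro ⟨φ, hφ⟩ ⟨ψ, hψ⟩
    refine ⟨⟨φ ⊓ ψ, Language.Formula.realize_inf.2 ⟨hφ, hψ⟩⟩, ?_, ?_⟩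
    · exact principal_mono.2 fun v hv => (Language.Formula.realize_inf.1 hv).1
    · exact principal_mono.2 fun v hv => (Language.Formula.realize_inf.1 hv).2
  have : (iInf B).NeBot := iInf_neBot_of_directed' hdir fun φ =>
    principal_neBot_iff.2 (exists_realize_of_elementarilyEquivalent hMN φ.2)
  have hU : ∀ φ : L.Formula α, φ.Realize x →
      ∀ᶠ v in (Ultrafilter.of (iInf B) : Filter (α → N)), φ.Realize v := fun φ hφ =>
    Ultrafilter.of_le (iInf B) (mem_iInf_of_mem ⟨φ, hφ⟩ (mem_principal_self _))
  refine ⟨Ultrafilter.of (iInf B), fun φ => ⟨fun h => ?_, hU φ⟩⟩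
  by_contra hφ
  exact Ultrafilter.eventually_not.1 (hU φ.not hφ) h

namespace HasAverageType

variable {U : Ultrafilter (α → N)} {x : α → M}

theorem eventually_relMap₂ (hU : HasAverageType L U x) (R : L.Relations 2) (a b : α) :
    (∀ᶠ v in (U : Filter (α → N)), Language.Structure.RelMap R ![v a, v b]) ↔
      Language.Structure.RelMap R ![x a, x b] := by
  simpa only [Language.Formula.realize_rel₂, Language.Term.realize_var] using
    hU (R.formula₂ (.var a) (.var b))

theorem eventually_eq (hU : HasAverageType L U x) (a b : α) :
    (∀ᶠ v in (U : Filter (α → N)), v a = v b) ↔ x a = x b := by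
  simpa only [Language.Formula.realize_equal, Language.Term.realize_var] using
    hU ((Language.Term.var a).equal (.var b))

theorem eventually_injOn (hU : HasAverageType L U x) {s : Set α} (hs : s.Finite)
    (hx : s.InjOn x) : ∀ᶠ v in (U : Filter (α → N)), s.InjOn v := by
  refine (eventually_all_finite hs).2 fun a ha => ?_
  refine (eventually_all_finite hs).2 fun b hb => ?_
  by_cases hab : a = b
  · exact .of_forall fun _ _ => hab
  · have hne : ∀ᶠ v in (U : Filter (α → N)), v a ≠ v b :=
      Ultrafilter.eventually_not.2 fun h => hab (hx ha hb ((hU.eventually_eq a b).1 h))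
    exact hne.mono fun v hv h => absurd h hv

end HasAverageType

end AverageType

section FinitelySupported

variable {L : Language} {P : Type*} {π : P → Type*}

variable (π) in
/-- Agreement on the coordinates in `F`; for `F = Set.Iic p` this is the relation `E_p`. -/
def agreeOn (F : Set P) : Setoid (∀ p, π p) where
  r x y := ∀ q ∈ F, x q = y q
  iseqv := ⟨fun _ _ _ => rfl, fun h q hq => (h q hq).symm,
    fun h h' q hq => (h q hq).trans (h' q hq)⟩

theorem eventually_agreeOn [∀ p, TopologicalSpace (π p)] [∀ p, DiscreteTopology (π p)]
    {F : Set P} (hF : F.Finite) {α : Type*} (g : α → ∀ p, π p) (a : α) :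
    ∀ᶠ v in 𝓝 g, agreeOn π F (v a) (g a) := by
  refine (eventually_all_finite hF).2 fun q _ => ?_
  have hcont : Continuous fun v : α → ∀ p, π p => v a q := by fun_prop
  exact hcont.continuousAt.eventually_mem ((isOpen_discrete {g a q}).mem_nhds rfl)

variable [L.Structure (∀ p, π p)]

variable (L π) in
/-- Every relation of the structure on `∏ p, π p` depends only on finitely many coordinates of its
arguments: the part of tameness that does not refer to the order on `P`. -/
def FinitelySupported : Prop :=
  ∀ ⦃n : ℕ⦄ (R : L.Relations n), ∃ F : Set P, F.Finite ∧ ∀ x y : Fin n → ∀ p, π p,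
    (∀ i, agreeOn π F (x i) (y i)) →
      (Language.Structure.RelMap R x ↔ Language.Structure.RelMap R y)

theorem realize_term_comp [L.IsRelational] {N α : Type*} [L.Structure N] (t : L.Term α)
    (σ : N → N) (v : α → N) : t.realize (σ ∘ v) = σ (t.realize v) := by
  cases t with
  | var => rfl
  | func f => exact isEmptyElim f

theorem FinitelySupported.exists_finite_realize_perm_iff [L.IsRelational]
    (hL : FinitelySupported L π) {α : Type*} {n : ℕ} (φ : L.BoundedFormula α n) :
    ∃ F : Set P, F.Finite ∧ ∀ σ : Equiv.Perm (∀ p, π p), (∀ x, agreeOn π F (σ x) x) →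
      ∀ (v : α → ∀ p, π p) (xs : Fin n → ∀ p, π p),
        φ.Realize (σ ∘ v) (σ ∘ xs) ↔ φ.Realize v xs := by
  induction φ with
  | falsum => exact ⟨∅, Set.finite_empty, fun _ _ _ _ => Iff.rfl⟩
  | equal t₁ t₂ =>
    refine ⟨∅, Set.finite_empty, fun σ _ v xs => ?_⟩
    simp only [Language.BoundedFormula.Realize, ← Sum.comp_elim, realize_term_comp,
      σ.injective.eq_iff]
  | rel R ts =>
    obtain ⟨F, hF, hR⟩ := hL R
    refine ⟨F, hF, fun σ hσ v xs => ?_⟩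
    simp only [Language.BoundedFormula.Realize, ← Sum.comp_elim, realize_term_comp]
    exact hR _ _ fun i => hσ _
  | imp φ ψ ihφ ihψ =>
    obtain ⟨F, hF, hφ⟩ := ihφ
    obtain ⟨G, hG, hψ⟩ := ihψ
    refine ⟨F ∪ G, hF.union hG, fun σ hσ v xs => ?_⟩
    exact imp_congr (hφ σ (fun x q hq => hσ x q (.inl hq)) v xs)
      (hψ σ (fun x q hq => hσ x q (.inr hq)) v xs)
  | all φ ih =>
    obtain ⟨F, hF, hφ⟩ := ih
    refine ⟨F, hF, fun σ hσ v xs => ?_⟩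
    simp only [Language.BoundedFormula.realize_all]
    rw [← σ.forall_congr_right]
    simp only [← Fin.comp_snoc, hφ σ hσ]

theorem FinitelySupported.exists_finite_realize_comp_iff [L.IsRelational]
    (hL : FinitelySupported L π) {n : ℕ} (φ : L.Formula (Fin n)) :
    ∃ F : Set P, F.Finite ∧ ∀ {α : Type*} {v w : α → ∀ p, π p} (x : Fin n → α),
      (Set.range x).InjOn v → (Set.range x).InjOn w →
      (∀ a ∈ Set.range x, agreeOn π F (v a) (w a)) →
        (φ.Realize (v ∘ x) ↔ φ.Realize (w ∘ x)) := by
  obtain ⟨F, hF, hφ⟩ := hL.exists_finite_realize_perm_iff φ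
  refine ⟨F, hF, fun {α v w} x hv hw hvw => ?_⟩
  obtain ⟨σ, hσ, hσx⟩ := exists_perm_eqOn (agreeOn π F) (Set.finite_range x) hv hw hvw
  have hcomp : σ ∘ v ∘ x = w ∘ x := funext fun i => hσx ⟨i, rfl⟩
  have hempty : σ ∘ (default : Fin 0 → ∀ p, π p) = default := Subsingleton.elim _ _
  have hσφ := hφ σ hσ (v ∘ x) default
  rw [hcomp, hempty] at hσφ
  exact hσφ.symm

variable [L.IsRelational] {M : Type*} [L.Structure M] [∀ p, TopologicalSpace (π p)]
  [∀ p, DiscreteTopology (π p)]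

theorem FinitelySupported.realize_comp_iff (hL : FinitelySupported L π)
    {U : Ultrafilter (M → ∀ p, π p)} (hU : HasAverageType L U (id : M → M))
    {g : M → ∀ p, π p} (hUg : ↑U ≤ 𝓝 g) (hg : g.Injective) {n : ℕ} (φ : L.Formula (Fin n))
    (x : Fin n → M) : φ.Realize (g ∘ x) ↔ φ.Realize x := by
  obtain ⟨F, hF, hφ⟩ := hL.exists_finite_realize_comp_iff φ
  have hagree : ∀ᶠ v in (U : Filter (M → ∀ p, π p)), ∀ a ∈ Set.range x, agreeOn π F (v a) (g a) :=
    (eventually_all_finite (Set.finite_range x)).2 fun a _ => hUg (eventually_agreeOn hF g a)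
  have hinj : ∀ᶠ v in (U : Filter (M → ∀ p, π p)), (Set.range x).InjOn v :=
    hU.eventually_injOn (Set.finite_range x) Function.injective_id.injOn
  have hiff : ∀ᶠ v in (U : Filter (M → ∀ p, π p)), φ.Realize (v ∘ x) ↔ φ.Realize (g ∘ x) :=
    (hinj.and hagree).mono fun v hv => hφ x hv.1 hg.injOn hv.2
  calc φ.Realize (g ∘ x)
    _ ↔ ∀ᶠ v in (U : Filter (M → ∀ p, π p)), φ.Realize (v ∘ x) := by
      rw [eventually_congr hiff, eventually_const]
    _ ↔ φ.Realize x := by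
      simpa only [Language.Formula.realize_relabel, Function.id_comp] using hU (φ.relabel x)

end FinitelySupported

section TameExpansion

instance (Rs : ℕ → Type*) : (relLang Rs).IsRelational := fun _ => inferInstanceAs (IsEmpty Empty)

variable {P : Type*} [PartialOrder P] {δ : P → ℕ} {Rs : ℕ → Type*} {E : P → Rs 2}
  [S : (relLang Rs).Structure (MProd δ)]

theorem IsTameExpansion.finitelySupported (hdf : ∀ p : P, (Set.Iic p).Finite)
    (hS : IsTameExpansion δ E S) : FinitelySupported (relLang Rs) fun p => Fin (δ p) :=
  fun k R =>
    let ⟨p, hp⟩ := hS.2 k R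
    ⟨Set.Iic p, hdf p, hp⟩

theorem IsTameExpansion.injective_of_le_nhds (hdf : ∀ p : P, (Set.Iic p).Finite)
    (hS : IsTameExpansion δ E S) {M : Type*} [SM : (relLang Rs).Structure M]
    (hsep : ∀ a b : M,
      (∀ p : P, SM.RelMap (E p : (relLang Rs).Relations 2) ![a, b]) → a = b)
    {U : Ultrafilter (M → MProd δ)} (hU : HasAverageType (relLang Rs) U (id : M → M))
    {g : M → MProd δ} (hUg : ↑U ≤ 𝓝 g) : g.Injective := by
  refine fun a b hab => hsep a b fun p => (hU.eventually_relMap₂ _ a b).1 ?_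
  have ha := hUg (eventually_agreeOn (hdf p) g a)
  have hb := hUg (eventually_agreeOn (hdf p) g b)
  filter_upwards [ha, hb] with v hva hvb
  exact (hS.1 p _).2 ((agreeOn _ _).trans hva (hab ▸ (agreeOn _ _).symm hvb))

end TameExpansion

end MP

theorem elementary_embedding_into_tame_expansion_general
    {P : Type*} [PartialOrder P] (hdf : ∀ p : P, (Set.Iic p).Finite) (δ : P → ℕ)
    {Rs : ℕ → Type*} (E : P → Rs 2)
    (S : (relLang Rs).Structure (MProd δ))
    (hS : IsTameExpansion δ E S)
    (Mp : Type*) [SMp : (relLang Rs).Structure Mp]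
    (hmod : Mp ⊨ (@Language.completeTheory (relLang Rs) (MProd δ) S))
    (hsep : ∀ a b : Mp,
      (∀ p : P, SMp.RelMap (E p : (relLang Rs).Relations 2) ![a, b]) → a = b) :
    Nonempty (@Language.ElementaryEmbedding (relLang Rs) Mp (MProd δ) SMp S) := by
  have hequiv : Mp ≅[relLang Rs] MProd δ := Language.elementarilyEquivalent_iff.2 <|
    Language.realize_iff_of_model_completeTheory (MProd δ) Mp
  obtain ⟨U, hU⟩ := exists_hasAverageType hequiv (id : Mp → Mp)
  have hUg : ↑U ≤ nhds U.lim := U.le_nhds_lim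
  have hg : U.lim.Injective := hS.injective_of_le_nhds hdf hsep hU hUg
  exact ⟨⟨U.lim, fun _ => (hS.finitelySupported hdf).realize_comp_iff hU hUg hg⟩⟩

/-- Let `𝔐⁺` be a tame expansion of `𝔐_P` with `P` infinite, and `T = Th(𝔐⁺)`.  Every
model of `T` in which `E_p`-equivalence for all `p ∈ P` implies equality elementarily
embeds into `𝔐⁺`. -/
theorem elementary_embedding_into_tame_expansion
    {P : Type u} [PartialOrder P] [Countable P] [Infinite P]
    (hdf : ∀ p : P, (Set.Iic p).Finite)
    (δ : P → ℕ) (hδ : ∀ p, 2 ≤ δ p)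
    {Rs : ℕ → Type v} (E : P → Rs 2)
    (S : (relLang Rs).Structure (MProd δ))
    (hS : IsTameExpansion δ E S)
    (Mp : Type u) [SMp : (relLang Rs).Structure Mp]
    (hmod : Mp ⊨ (@Language.completeTheory (relLang Rs) (MProd δ) S))
    (hsep : ∀ a b : Mp,
      (∀ p : P, SMp.RelMap (E p : (relLang Rs).Relations 2) ![a, b]) → a = b) :
    Nonempty (@Language.ElementaryEmbedding (relLang Rs) Mp (MProd δ) SMp S) :=
  elementary_embedding_into_tame_expansion_general hdf δ E S hS Mp hmod hsep
end

section
/- Let I_* be a countably infinite index set, let C_i be a nonzero abelian group for each i ∈ I_*, and let α_* < (2^{ℵ₀})⁺ be an ordinal. Then there exists a C̄-system A = (A_I : I ∈ 𝐈) with rnk(A) > α_*. -/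
universe u

namespace CSys

variable {ι : Type u} (C : ι → Type u) [∀ i, AddCommGroup (C i)]

/-- A `C̄`-system: a collection `idx` of subsets of the index set, directed under inclusion,
together with a subgroup `grp I ≤ ∏_{i ∈ I} C i` for each `I`, closed under the restriction
maps. -/
structure CSystem where
  idx : Set (Set ι)
  directed : ∀ I ∈ idx, ∀ J ∈ idx, ∃ K ∈ idx, I ⊆ K ∧ J ⊆ K
  grp : (I : Set ι) → AddSubgroup ((i : I) → C (i : ι))
  restrict_mem : ∀ I ∈ idx, ∀ J ∈ idx, ∀ (h : I ⊆ J), ∀ a ∈ grp J,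
    (fun i : I => a ⟨(i : ι), h i.2⟩) ∈ grp I

variable {C}

/-- `rankGE S α I a` says that the rank of `a ∈ A_I` in the inverse system `S` is `≥ α`:
for every `β < α` and every `J ⊇ I` in the system there is `b ∈ A_J` restricting to `a`
with rank `≥ β`. -/
def rankGE (S : CSystem C) : Ordinal.{u} → (I : Set ι) → ((i : I) → C (i : ι)) → Prop
  | α, I, a => ∀ β : Ordinal.{u}, β < α → ∀ J ∈ S.idx, ∀ (h : I ⊆ J),
      ∃ b ∈ S.grp J, (fun i : I => b ⟨(i : ι), h i.2⟩) = a ∧ rankGE S β J b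
  termination_by α => α

/-- `rnk(A)`: the least ordinal `α` such that every element of the system of rank `< ∞`
has rank `< α`. -/
noncomputable def sysRank (S : CSystem C) : Ordinal.{u} :=
  sInf {α : Ordinal.{u} | ∀ I ∈ S.idx, ∀ a ∈ S.grp I,
    (¬ ∀ β : Ordinal.{u}, rankGE S β I a) → ¬ rankGE S α I a}

end CSys

open CSys

/-!
Let `T` be the tree of finite strictly decreasing sequences of ordinals below `ω * α`, coded
injectively by subsets of `ι`. The generator of a node `l` takes nonzero values along a "branch" of
coordinates, which record at each level `k` finite approximations to the code of `l.take k`.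
Hence restricting to level `k` replaces the generator of `l` by that of `l.take k`, while distinct
nodes of the same length have branches that eventually separate. So the generators are independent
up to an ideal of common annihilators, and the rank in the system is governed by that in the tree.
An extension to level `m` costs `m - n` steps down the tree rather than one, whence the factor `ω`.
-/

namespace CSys

open Cardinal Ordinal

section Rank

variable {ι : Type u} {C : ι → Type u} [∀ i, AddCommGroup (C i)] {S : CSystem C}
  {I : Set ι} {a : (i : I) → C (i : ι)} {α β : Ordinal.{u}}

theorem rankGE_of_le (h : β ≤ α) (ha : rankGE S α I a) : rankGE S β I a := by
  rw [rankGE] at ha ⊢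
  exact fun γ hγ => ha γ (hγ.trans_le h)

theorem lt_sysRank (hI : I ∈ S.idx) (haI : a ∈ S.grp I) (hα : rankGE S α I a)
    (hβ : ¬ rankGE S β I a) : α < sysRank S := by
  classical
  let bound (p : Σ I : Set ι, ((i : I) → C (i : ι))) : Ordinal.{u} :=
    if h : ∃ γ, ¬ rankGE S γ p.1 p.2 then h.choose else 0
  have hne : {α : Ordinal.{u} | ∀ I ∈ S.idx, ∀ a ∈ S.grp I,
      (¬ ∀ γ : Ordinal.{u}, rankGE S γ I a) → ¬ rankGE S α I a}.Nonempty := by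
    refine ⟨⨆ p, bound p, fun J _ b _ hb hr => ?_⟩
    have hb : ∃ γ, ¬ rankGE S γ J b := not_forall.1 hb
    have hle : hb.choose ≤ ⨆ p, bound p :=
      (dif_pos hb).ge.trans (Ordinal.le_iSup bound ⟨J, b⟩)
    exact hb.choose_spec (rankGE_of_le hle hr)
  by_contra! hle
  exact csInf_mem hne I hI a haI (fun h => hβ (h β)) (rankGE_of_le hle hα)

end Rank

theorem exists_mk_eq_forall_iInf_eq {ι L : Type*} [CompleteLattice L] [WellFoundedGT L]
    (N : ι → L) :
    ∃ Y : Set ι, #Y = #ι ∧ ∀ Z ⊆ Y, #Z = #ι → ⨅ i ∈ Z, N i = ⨅ i ∈ Y, N i := by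
  obtain ⟨Y, hY, hmax⟩ := exists_maximalFor_of_wellFoundedGT
    (fun Y : Set ι => #Y = #ι) (fun Y => ⨅ i ∈ Y, N i) ⟨Set.univ, mk_univ⟩
  refine ⟨Y, hY, fun Z hZY hZ => ?_⟩
  have hle : ⨅ i ∈ Y, N i ≤ ⨅ i ∈ Z, N i := biInf_mono hZY
  exact (hmax hZ hle).antisymm hle

open Classical in
theorem exists_finset_injOn_filter_mem {β κ : Type*} {g : β → Set κ} {s : Finset β}
    (hg : Set.InjOn g s) : ∃ F : Finset κ, Set.InjOn (fun x => {a ∈ F | a ∈ g x}) (s : Set β) := by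
  have hsep (p : s.offDiag) : ∃ a, ¬(a ∈ g p.1.1 ↔ a ∈ g p.1.2) :=
    have ⟨h₁, h₂, hne⟩ := Finset.mem_offDiag.1 p.2
    not_forall.1 (mt Set.ext (hg.ne h₁ h₂ hne))
  choose a ha using hsep
  let F : Finset κ := Finset.univ.image a
  refine ⟨F, fun x hx y hy hxy => ?_⟩
  by_contra hne
  have hmem : (x, y) ∈ s.offDiag := Finset.mem_offDiag.2 ⟨hx, hy, hne⟩
  have haF : a ⟨(x, y), hmem⟩ ∈ F := Finset.mem_image_of_mem a (Finset.mem_univ _)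
  exact ha ⟨(x, y), hmem⟩ (Finset.filter_inj'.1 hxy haF)

theorem exists_apply_notMem_of_mapDomain_apply_notMem {β γ R : Type*} [AddCommMonoid R]
    {N : AddSubmonoid R} {f : β → γ} {x : β →₀ R} {c : γ} (h : x.mapDomain f c ∉ N) :
    ∃ b ∈ x.support, f b = c ∧ x b ∉ N := by
  classical
  contrapose! h
  rw [Finsupp.mapDomain, Finsupp.sum_apply, Finsupp.sum]
  refine N.sum_mem fun b hb => ?_
  rw [Finsupp.single_apply]
  split_ifs with hbc
  · exact h b hb hbc
  · exact N.zero_mem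

section TreeSystem

variable {ι κ : Type u} {A : Type*} (e : ℕ × Finset κ × Finset κ × κ ↪ ι) (g : List A → Set κ)

/-- The `n`-th index set of the tree system. The embedding `e` labels coordinates by quadruples
`(k, F, s, j)`: the level `k`, a finite window `F`, a candidate `s` for the trace on `F` of a code,
and a dummy `j` which repeats every such condition `#κ` times. -/
def level (n : ℕ) : Set ι := e '' {p | p.1 ≤ n}

open Classical in
/-- The coordinates at which the generator of the node `l` is nonzero: those whose label
`(k, F, s, j)` guesses correctly the trace `s` on `F` of the code of `l.take k`. -/
def branch (l : List A) : Set ι := e '' {p | p.2.2.1 = {a ∈ p.2.1 | a ∈ g (l.take p.1)}}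

theorem level_strictMono [Nonempty κ] : StrictMono (level e) := by
  have j : κ := Classical.arbitrary κ
  refine strictMono_of_le_iff_le fun n m => ?_
  rw [level, level, Set.image_subset_image_iff e.injective]
  exact ⟨fun h p hp => hp.trans h, fun h => h (show ((n, ∅, ∅, j) : _ × _).1 ≤ n from le_rfl)⟩

theorem mem_branch_take_iff {n : ℕ} {i : ι} (hi : i ∈ level e n) (l : List A) :
    i ∈ branch e g (l.take n) ↔ i ∈ branch e g l := by
  obtain ⟨p, hp, rfl⟩ := hi
  have htake : (l.take n).take p.1 = l.take p.1 := by rw [List.take_take, min_eq_left hp]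
  rw [branch, branch, e.injective.mem_set_image, e.injective.mem_set_image, Set.mem_ofPred_eq,
    Set.mem_ofPred_eq, htake]

variable {g} in
theorem exists_mk_eq_forall_mem_branch_iff (hg : Function.Injective g) {s : Finset (List A)} {n : ℕ}
    (hs : ∀ l ∈ s, l.length = n) {l : List A} (hl : l ∈ s) :
    ∃ Z ⊆ level e n, #Z = #κ ∧ ∀ i ∈ Z, ∀ l' ∈ s, i ∈ branch e g l' ↔ l' = l := by
  classical
  obtain ⟨F, hF⟩ := exists_finset_injOn_filter_mem (hg.injOn (s := s))
  let point (j : κ) : ι := e (n, F, {a ∈ F | a ∈ g l}, j)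
  have hpoint : Function.Injective point := fun j j' h => by simpa [point] using h
  refine ⟨Set.range point, ?_, mk_range_eq point hpoint, ?_⟩
  · rintro _ ⟨j, rfl⟩
    exact ⟨_, le_refl n, rfl⟩
  · rintro _ ⟨j, rfl⟩ l' hl'
    have htake : l'.take n = l' := List.take_of_length_le (hs l' hl').le
    simp only [point, branch, e.injective.mem_set_image, Set.mem_ofPred_eq, htake]
    exact ⟨fun h => hF hl' hl h.symm, fun h => by rw [h]⟩

variable {C : ι → Type u} [∀ i, AddCommGroup (C i)] (c : ∀ i, C i)

open Classical in
/-- The element of the full product attached to the node `l`: it agrees with `c` on the branch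
of `l` and vanishes elsewhere. -/
noncomputable def generator (l : List A) : ∀ i, C i := (branch e g l).piecewise c 0

/-- The integral combination of generators with coefficients `x`. -/
noncomputable def combination : (List A →₀ ℤ) →ₗ[ℤ] ∀ i, C i :=
  Finsupp.linearCombination ℤ (generator e g c)

theorem combination_apply (x : List A →₀ ℤ) (i : ι) :
    combination e g c x i = ∑ l ∈ x.support, x l • generator e g c l i := by
  simp [combination, Finsupp.linearCombination_apply, Finsupp.sum, Finset.sum_apply]

theorem generator_of_mem {l : List A} {i : ι} (h : i ∈ branch e g l) :
    generator e g c l i = c i :=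
  if_pos h

theorem generator_of_notMem {l : List A} {i : ι} (h : i ∉ branch e g l) :
    generator e g c l i = 0 :=
  if_neg h

theorem generator_take {n : ℕ} {i : ι} (hi : i ∈ level e n) (l : List A) :
    generator e g c (l.take n) i = generator e g c l i := by
  by_cases h : i ∈ branch e g l
  · rw [generator_of_mem e g c h, generator_of_mem e g c ((mem_branch_take_iff e g hi l).2 h)]
  · rw [generator_of_notMem e g c h,
      generator_of_notMem e g c (mt (mem_branch_take_iff e g hi l).1 h)]

theorem combination_mapDomain_take {n : ℕ} {i : ι} (hi : i ∈ level e n) (x : List A →₀ ℤ) :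
    combination e g c (x.mapDomain (List.take n)) i = combination e g c x i := by
  rw [combination, Finsupp.linearCombination_mapDomain, Finsupp.linearCombination_apply,
    Finsupp.linearCombination_apply, Finsupp.sum, Finsupp.sum, Finset.sum_apply, Finset.sum_apply]
  exact Finset.sum_congr rfl fun l _ => congrArg (x l • ·) (generator_take e g c hi l)

variable (T : Descriptive.tree A)

/-- The nodes of the tree `T` at height `n`. -/
def layer (n : ℕ) : Set (List A) := {l | l ∈ T ∧ l.length = n}

theorem mapDomain_take_mem_supported_layer {n m : ℕ} (h : n ≤ m) {x : List A →₀ ℤ}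
    (hx : x ∈ Finsupp.supported ℤ ℤ (layer T m)) :
    x.mapDomain (List.take n) ∈ Finsupp.supported ℤ ℤ (layer T n) := by
  classical
  intro _ hmem
  obtain ⟨l, hl, rfl⟩ := Finset.mem_image.1 (Finsupp.mapDomain_support hmem)
  obtain ⟨hlT, hlm⟩ := hx hl
  exact ⟨Descriptive.Tree.mem_of_prefix (l.take_prefix n) hlT, by simp [hlm, h]⟩

variable {T e g c} in
theorem apply_mem_of_combination_eq_zero (hg : Function.Injective g) {N : Ideal ℤ}
    (hN : ∀ Z : Set ι, Z ⊆ Set.range e → #Z = #κ →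
      ⨅ i ∈ Z, Ideal.torsionOf ℤ (C i) (c i) ≤ N)
    {n : ℕ} {x : List A →₀ ℤ} (hx : x ∈ Finsupp.supported ℤ ℤ (layer T n))
    (h0 : ∀ i ∈ level e n, combination e g c x i = 0) (l : List A) : x l ∈ N := by
  by_cases hl : l ∈ x.support
  swap
  · rw [Finsupp.notMem_support_iff.1 hl]
    exact N.zero_mem
  obtain ⟨Z, hZn, hZ, hbranch⟩ := exists_mk_eq_forall_mem_branch_iff e hg (fun l hl => (hx hl).2) hl
  refine hN Z (hZn.trans (Set.image_subset_range _ _)) hZ ?_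
  simp only [Ideal.mem_iInf, Ideal.mem_torsionOf_iff]
  intro i hi
  have hgen : ∀ l' ∈ x.support, l' ≠ l → x l' • generator e g c l' i = 0 := fun l' hl' hne => by
    rw [generator_of_notMem e g c (mt (hbranch i hi l' hl').1 hne), smul_zero]
  calc x l • c i = x l • generator e g c l i := by
        rw [generator_of_mem e g c ((hbranch i hi l hl).2 rfl)]
    _ = combination e g c x i := by
        rw [combination_apply, Finset.sum_eq_single_of_mem l hl hgen]
    _ = 0 := h0 i (hZn hi)

/-- The group over `I` generated by the restrictions to `I` of the generators of the nodes whose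
height `n` satisfies `level e n = I`; it is trivial if `I` is not a level. -/
noncomputable def treeGroup (I : Set ι) : AddSubgroup ((i : I) → C (i : ι)) :=
  ((Finsupp.supported ℤ ℤ {l | l ∈ T ∧ level e l.length = I}).map
    ((LinearMap.pi fun i : I => LinearMap.proj (i : ι)) ∘ₗ combination e g c)).toAddSubgroup

variable [Nonempty κ]

theorem mem_treeGroup_level {n : ℕ} {a : (i : level e n) → C (i : ι)} :
    a ∈ treeGroup e g c T (level e n) ↔ ∃ x ∈ Finsupp.supported ℤ ℤ (layer T n),
      (level e n).domRestrict (combination e g c x) = a := by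
  simp only [treeGroup, (level_strictMono e).injective.eq_iff]
  rfl

/-- The `C̄`-system on the levels whose groups are generated by the nodes of the tree `T`. -/
noncomputable def treeSystem : CSystem C where
  idx := Set.range (level e)
  directed := by
    rintro _ ⟨n, rfl⟩ _ ⟨m, rfl⟩
    have hmono := (level_strictMono e).monotone
    exact ⟨_, ⟨max n m, rfl⟩, hmono (le_max_left n m), hmono (le_max_right n m)⟩
  grp := treeGroup e g c T
  restrict_mem := by
    rintro _ ⟨n, rfl⟩ _ ⟨m, rfl⟩ h a ha
    obtain ⟨x, hx, rfl⟩ := (mem_treeGroup_level e g c T).1 ha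
    have hnm : n ≤ m := (level_strictMono e).le_iff_le.1 h
    exact (mem_treeGroup_level e g c T).2 ⟨_, mapDomain_take_mem_supported_layer T hnm hx,
      funext fun i => combination_mapDomain_take e g c i.2 x⟩

variable {T}

theorem restrict_generator_mem_treeGroup {l : List A} (hl : l ∈ T) :
    (level e l.length).domRestrict (generator e g c l) ∈ treeGroup e g c T (level e l.length) :=
  (mem_treeGroup_level e g c T).2 ⟨Finsupp.single l 1,
    Finsupp.single_mem_supported ℤ 1 ⟨hl, rfl⟩, by simp [combination]⟩

theorem exists_append_mem_of_add_natCast_le {ρ : List A → Ordinal.{u}}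
    (hρ : ∀ l ∈ T, ∀ γ < ρ l, ∃ a, l ++ [a] ∈ T ∧ γ ≤ ρ (l ++ [a])) {γ : Ordinal.{u}} (k : ℕ)
    {l : List A} (hl : l ∈ T) (hle : γ + k ≤ ρ l) :
    ∃ t : List A, t.length = k ∧ l ++ t ∈ T ∧ γ ≤ ρ (l ++ t) := by
  induction k generalizing l with
  | zero => exact ⟨[], rfl, by simpa using hl, by simpa using hle⟩
  | succ k ih =>
    have hlt : γ + k < ρ l := by
      refine lt_of_lt_of_le ?_ hle
      gcongr
      exact k.lt_succ_self
    obtain ⟨a, haT, ha⟩ := hρ l hl _ hlt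
    obtain ⟨t, rfl, htT, ht⟩ := ih haT ha
    exact ⟨a :: t, rfl, by simpa using htT, by simpa using ht⟩

theorem rankGE_restrict_generator {ρ : List A → Ordinal.{u}}
    (hρ : ∀ l ∈ T, ∀ γ < ρ l, ∃ a, l ++ [a] ∈ T ∧ γ ≤ ρ (l ++ [a])) {γ : Ordinal.{u}}
    {l : List A} (hl : l ∈ T) (hle : ω * γ ≤ ρ l) :
    rankGE (treeSystem e g c T) γ (level e l.length)
      ((level e l.length).domRestrict (generator e g c l)) := by
  induction γ using WellFoundedLT.induction generalizing l with
  | ind γ ih =>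
    rw [rankGE]
    rintro β hβ _ ⟨m, rfl⟩ h
    have hlm : l.length ≤ m := (level_strictMono e).le_iff_le.1 h
    have hβl : ω * β + (m - l.length : ℕ) ≤ ρ l := calc
      ω * β + (m - l.length : ℕ) ≤ ω * β + ω := by gcongr; exact (natCast_lt_omega0 _).le
      _ = ω * Order.succ β := (mul_succ ω β).symm
      _ ≤ ω * γ := by gcongr; exact Order.succ_le_of_lt hβ
      _ ≤ ρ l := hle
    obtain ⟨t, ht, htT, hβt⟩ := exists_append_mem_of_add_natCast_le hρ _ hl hβl
    obtain rfl : (l ++ t).length = m := by simp [ht, hlm]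
    refine ⟨_, restrict_generator_mem_treeGroup e g c htT, ?_, ih β hβ htT hβt⟩
    funext i
    exact (generator_take e g c i.2 (l ++ t)).symm.trans (by rw [List.take_left]; rfl)

variable {e g c} {N : Ideal ℤ}

theorem not_rankGE_restrict_combination (hg : Function.Injective g)
    (hN : ∀ Z : Set ι, Z ⊆ Set.range e → #Z = #κ →
      ⨅ i ∈ Z, Ideal.torsionOf ℤ (C i) (c i) ≤ N)
    {ρ : List A → Ordinal.{u}} (hρ : ∀ l a, l ++ [a] ∈ T → ρ (l ++ [a]) < ρ l)
    {n : ℕ} {x : List A →₀ ℤ} (hx : x ∈ Finsupp.supported ℤ ℤ (layer T n)) {l : List A}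
    (hl : x l ∉ N) :
    ¬ rankGE (treeSystem e g c T) (Order.succ (ρ l)) (level e n)
      ((level e n).domRestrict (combination e g c x)) := by
  induction hγ : ρ l using WellFoundedLT.induction generalizing n x l with
  | ind γ ih =>
    subst hγ
    intro hrank
    rw [rankGE] at hrank
    obtain ⟨b, hb, hbx, hbrank⟩ := hrank _ (Order.lt_succ _) _ ⟨n + 1, rfl⟩
      ((level_strictMono e).monotone n.le_succ)
    obtain ⟨y, hy, rfl⟩ := (mem_treeGroup_level e g c T).1 hb
    have hdiff : (x - y.mapDomain (List.take n)) l ∈ N :=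
      apply_mem_of_combination_eq_zero hg hN
        (sub_mem hx (mapDomain_take_mem_supported_layer T n.le_succ hy)) (fun i hi => by
          rw [map_sub, Pi.sub_apply, combination_mapDomain_take e g c hi, sub_eq_zero]
          exact (congrFun hbx ⟨i, hi⟩).symm) l
    have hyl : y.mapDomain (List.take n) l ∉ N := fun h =>
      hl (by simpa using N.add_mem hdiff h)
    obtain ⟨l', hl'y, rfl, hl'N⟩ := exists_apply_notMem_of_mapDomain_apply_notMem
      (N := N.toAddSubmonoid) hyl
    obtain ⟨hl'T, hl'n⟩ := hy hl'y
    have hlt : ρ l' < ρ (l'.take n) := by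
      have hconcat : l'.take n ++ [l'[n]] = l' := by
        rw [List.take_concat_get', ← hl'n, List.take_length]
      simpa only [hconcat] using hρ (l'.take n) l'[n] (by rwa [hconcat])
    exact ih _ hlt hy hl'N rfl (rankGE_of_le (Order.succ_le_of_lt hlt) hbrank)

theorem lt_sysRank_treeSystem (hg : Function.Injective g)
    (hN : ∀ Z : Set ι, Z ⊆ Set.range e → #Z = #κ →
      ⨅ i ∈ Z, Ideal.torsionOf ℤ (C i) (c i) ≤ N) (hN1 : N ≠ ⊤)
    {ρ : List A → Ordinal.{u}} (hlt : ∀ l a, l ++ [a] ∈ T → ρ (l ++ [a]) < ρ l)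
    (hle : ∀ l ∈ T, ∀ γ < ρ l, ∃ a, l ++ [a] ∈ T ∧ γ ≤ ρ (l ++ [a]))
    (hnil : [] ∈ T) {α : Ordinal.{u}} (hα : ω * α ≤ ρ []) :
    α < sysRank (treeSystem e g c T) := by
  have hupper := not_rankGE_restrict_combination hg hN hlt
    (Finsupp.single_mem_supported ℤ 1 (show [] ∈ layer T ([] : List A).length from ⟨hnil, rfl⟩))
    (l := []) (by simpa using N.ne_top_iff_one.1 hN1)
  rw [combination, Finsupp.linearCombination_single, one_smul] at hupper
  exact lt_sysRank ⟨([] : List A).length, rfl⟩ (restrict_generator_mem_treeGroup e g c hnil)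
    (rankGE_restrict_generator e g c hle hnil hα) hupper

end TreeSystem

section DecreasingTree

/-- The tree of finite strictly decreasing sequences. -/
def decreasingTree (A : Type*) [LT A] : Descriptive.tree A :=
  ⟨{l | l.IsChain (· > ·)}, fun _ _ h => (List.isChain_append.1 h).1⟩

/-- The rank of a node in the tree of strictly decreasing sequences of ordinals below `δ`: its last
entry, and `δ` for the root. -/
noncomputable def lastOrd {δ : Ordinal.{u}} (l : List δ.ToType) : Ordinal.{u} :=
  l.getLast?.elim δ fun a => a.toOrd

theorem append_singleton_mem_decreasingTree {δ : Ordinal.{u}} {l : List δ.ToType} {a : δ.ToType} :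
    l ++ [a] ∈ decreasingTree δ.ToType ↔
      l ∈ decreasingTree δ.ToType ∧ (a.toOrd : Ordinal.{u}) < lastOrd l := by
  change (l ++ [a]).IsChain (· > ·) ↔ l.IsChain (· > ·) ∧ _
  rw [List.isChain_append, lastOrd]
  rcases l.getLast? with _ | b
  · have haδ : (a.toOrd : Ordinal) < δ := a.toOrd.2
    simp [haδ]
  · simp

theorem lastOrd_append_singleton {δ : Ordinal.{u}} (l : List δ.ToType) (a : δ.ToType) :
    lastOrd (l ++ [a]) = a.toOrd := by
  simp [lastOrd]

theorem exists_append_singleton_mem_decreasingTree {δ γ : Ordinal.{u}} {l : List δ.ToType}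
    (hl : l ∈ decreasingTree δ.ToType) (hγ : γ < lastOrd l) :
    ∃ a, l ++ [a] ∈ decreasingTree δ.ToType ∧ lastOrd (l ++ [a]) = γ := by
  have hδ : lastOrd l ≤ δ := by
    rw [lastOrd]
    rcases l.getLast? with _ | b
    · exact le_rfl
    · exact b.toOrd.2.le
  have hmk : (ToType.mk (⟨γ, hγ.trans_le hδ⟩ : Set.Iio δ)).toOrd = γ := by simp
  exact ⟨_, append_singleton_mem_decreasingTree.2 ⟨hl, by rwa [hmk]⟩,
    (lastOrd_append_singleton l _).trans hmk⟩

end DecreasingTree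

theorem nonempty_equiv_nat_prod_finset {ι κ : Type u} [Infinite κ] (h : #ι = #κ) :
    Nonempty (ℕ × Finset κ × Finset κ × κ ≃ ι) := by
  refine Cardinal.eq.1 ?_
  have h0 : ℵ₀ ≤ #κ := aleph0_le_mk κ
  simp [h, mul_eq_self h0, aleph0_mul_eq h0]

theorem nonempty_list_omega0_mul_embedding_set {κ : Type u} [Infinite κ] {α : Ordinal.{u}}
    (hα : α.card ≤ 2 ^ #κ) : Nonempty (List (ω * α).ToType ↪ Set κ) := by
  have h0 : ℵ₀ ≤ (2 : Cardinal.{u}) ^ #κ := (aleph0_le_mk κ).trans (cantor _).le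
  refine Cardinal.le_def _ _ |>.1 ?_
  calc #(List (ω * α).ToType) ≤ max ℵ₀ (ℵ₀ * α.card) := by simpa using mk_list_le_max (ω * α).ToType
    _ ≤ 2 ^ #κ := max_le h0 (mul_le_of_le h0 h0 hα)
    _ = #(Set κ) := (mk_set).symm

end CSys

theorem exists_system_of_large_rank_general {ι : Type u} [Infinite ι]
    (C : ι → Type u) [∀ i, AddCommGroup (C i)] [∀ i, Nontrivial (C i)]
    (α : Ordinal.{u}) (hα : α < (Order.succ (2 ^ Cardinal.mk ι : Cardinal.{u})).ord) :
    ∃ S : CSystem C, α < sysRank S := by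
  choose c hc using fun i => exists_ne (0 : C i)
  obtain ⟨Y, hY, hN⟩ := exists_mk_eq_forall_iInf_eq fun i => Ideal.torsionOf ℤ (C i) (c i)
  obtain ⟨e⟩ := nonempty_equiv_nat_prod_finset hY
  obtain ⟨g⟩ := nonempty_list_omega0_mul_embedding_set
    (Order.lt_succ_iff.1 (Cardinal.lt_ord.1 hα))
  obtain ⟨i, hi⟩ : Y.Nonempty := ⟨_, (e (0, ∅, ∅, Classical.arbitrary ι)).2⟩
  have hN1 : ⨅ i ∈ Y, Ideal.torsionOf ℤ (C i) (c i) ≠ ⊤ := fun h => by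
    have h1 : 1 ∈ Ideal.torsionOf ℤ (C i) (c i) :=
      biInf_le (fun i => Ideal.torsionOf ℤ (C i) (c i)) hi (h ▸ Submodule.mem_top)
    exact hc i (by simpa using (Ideal.mem_torsionOf_iff _ _).1 h1)
  let e' := e.toEmbedding.trans (Function.Embedding.subtype (· ∈ Y))
  have hrange : Set.range e' ⊆ Y := by rintro _ ⟨p, rfl⟩; exact (e p).2
  refine ⟨treeSystem e' g c (decreasingTree (Ordinal.omega0 * α).ToType),
    lt_sysRank_treeSystem (ρ := lastOrd) g.injective (fun Z hZ h => (hN Z (hZ.trans hrange) h).le)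
      hN1 (fun l a h => ?_) (fun l hl γ hγ => ?_) List.isChain_nil le_rfl⟩
  · exact lastOrd_append_singleton l a ▸ (append_singleton_mem_decreasingTree.1 h).2
  · exact (exists_append_singleton_mem_decreasingTree hl hγ).imp fun a h => h.imp_right Eq.ge

/-- For a countably infinite index set, nonzero abelian groups `Cᵢ`, and any ordinal
`α* < (2^ℵ₀)⁺`, there is a `C̄`-system of rank `> α*`. -/
theorem exists_system_of_large_rank {ι : Type u} [Countable ι] [Infinite ι]
    (C : ι → Type u) [∀ i, AddCommGroup (C i)] [∀ i, Nontrivial (C i)]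
    (α : Ordinal.{u}) (hα : α < (Order.succ (2 ^ Cardinal.aleph0 : Cardinal.{u})).ord) :
    ∃ S : CSystem C, α < sysRank S :=
  exists_system_of_large_rank_general C α (by rwa [Cardinal.mk_eq_aleph0])
end
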